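/- Let S be a semiring, X a digraph with vertex type V, edge type E and source and target maps s, t : E → V, and let v be a vertex incident to no self-loop (there is no edge e with s e = t e = v). Assume that either exactly one edge of X has source v or exactly one edge of X has target v. Let P = {(a, b) ∈ E × E : s a = v and t b = v}. Then the S-linear map (P →₀ S) → Ω_S(v) sending the generator indexed by (a, b) to χ_a + χ_b is bijective; in particular Ω_S(v) is a free S-semimodule on the elements χ_a + χ_b for (a,b) ∈ P. -/

import Mathlib

/-! Suppose `a` is the only edge with source `v`. Then a pair `(a', b)` in `P` has `a' = a`, so it is
determined by `b`, and since there is no self-loop the value of `∑ x_p (χ_a + χ_b)` at an edge `b` with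
target `v` is the coefficient `x_(a,b)` (`pairGeneratorMap_apply_snd`). This gives injectivity. For
surjectivity, an element of `Ω_S(v)` is determined by its values on the edges with target `v`
(`Omega_ext`): these fix its total incoming value, hence its total outgoing value, which is its value
at `a`. Reading off coefficients from `λ ∈ Ω_S(v)` therefore yields a preimage of `λ`. No subtraction
is used, so this works over any semiring. The case of a unique edge with target `v` follows by
reversing all edges. -/

open scoped Classical in
/-- The `R`-linear map `(E →₀ M) →ₗ[R] M` summing the values of a finitely supported
function over the edges `e` with `s e = v` (`s` being either the source or the target
map of a digraph); on a generator `single e x` it gives `x` if `s e = v` and `0`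
otherwise. -/
noncomputable def degMap (R : Type) [Semiring R] {V E : Type} (M : Type)
    [AddCommMonoid M] [Module R M] (s : E → V) (v : V) : (E →₀ M) →ₗ[R] M :=
  Finsupp.lsum ℕ fun e => if s e = v then (LinearMap.id : M →ₗ[R] M) else 0

/-- The `M`-valued orientation semimodule of the digraph `(V, E, s, t)` at a vertex
`v`: finitely supported functions `E →₀ M` vanishing on edges not incident to `v`
and whose total value on edges with source `v` agrees with the total value on edges
with target `v`. -/
noncomputable def OmegaMod (R : Type) [Semiring R] {V E : Type} (M : Type)
    [AddCommMonoid M] [Module R M] (s t : E → V) (v : V) : Submodule R (E →₀ M) :=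
  Finsupp.supported M R {e | s e = v ∨ t e = v} ⊓
    LinearMap.eqLocus (degMap R M s v) (degMap R M t v)

/-- The orientation semimodule `Ω_S(v)` of the digraph `(V, E, s, t)` over the
semiring `S` at the vertex `v`. -/
noncomputable def Omega (S : Type) [Semiring S] {V E : Type} (s t : E → V) (v : V) :
    Submodule S (E →₀ S) :=
  OmegaMod S S s t v

/-- The `S`-linear map from the free `S`-semimodule on
`P = {(a,b) : s a = v ∧ t b = v}` to `E →₀ S` sending the generator indexed by
`(a, b)` to `χ_a + χ_b`. -/
noncomputable def pairGeneratorMap (S : Type) [Semiring S] {V E : Type}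
    (s t : E → V) (v : V) :
    ({p : E × E // s p.1 = v ∧ t p.2 = v} →₀ S) →ₗ[S] (E →₀ S) :=
  Finsupp.lsum ℕ fun p => Finsupp.lsingle p.1.1 + Finsupp.lsingle p.1.2

theorem degMap_single (S : Type) [Semiring S] {V E : Type} (s : E → V) (v : V) (e : E) (c : S)
    [Decidable (s e = v)] :
    degMap S S s v (Finsupp.single e c) = if s e = v then c else 0 := by
  unfold degMap
  by_cases h : s e = v <;> simp [h]

theorem degMap_congr (S : Type) [Semiring S] {V E : Type} (s : E → V) (v : V) (x y : E →₀ S)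
    (h : ∀ e, s e = v → x e = y e) : degMap S S s v x = degMap S S s v y := by
  classical
  -- Both sums may be taken over the union of the two supports.
  have key : ∀ (z : E →₀ S) (F : Finset E), z.support ⊆ F →
      degMap S S s v z = ∑ e ∈ F, if s e = v then z e else 0 := by
    intro z F hF
    have hz : z = ∑ e ∈ F, Finsupp.single e (z e) :=
      (Finsupp.sum_single z).symm.trans (Finsupp.sum_of_support_subset z hF _ (by simp))
    conv_lhs => rw [hz]
    simp only [map_sum, degMap_single]
  rw [key x _ Finset.subset_union_left, key y _ Finset.subset_union_right]
  refine Finset.sum_congr rfl fun e _ => ?_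
  split_ifs with he
  · exact h e he
  · rfl

theorem degMap_eq_apply (S : Type) [Semiring S] {V E : Type} (s : E → V) (v : V) (a : E)
    (ha : s a = v) (hu : ∀ e, s e = v → e = a) (x : E →₀ S) : degMap S S s v x = x a := by
  classical
  rw [degMap_congr S s v x (Finsupp.single a (x a)), degMap_single, if_pos ha]
  intro e he
  simp [hu e he]

theorem pairGeneratorMap_single (S : Type) [Semiring S] {V E : Type} (s t : E → V) (v : V)
    (p : {p : E × E // s p.1 = v ∧ t p.2 = v}) (c : S) :
    pairGeneratorMap S s t v (Finsupp.single p c) =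
      Finsupp.single p.1.1 c + Finsupp.single p.1.2 c := by
  simp [pairGeneratorMap]

theorem mem_Omega (S : Type) [Semiring S] {V E : Type} (s t : E → V) (v : V) (x : E →₀ S) :
    x ∈ Omega S s t v ↔
      (∀ e, ¬(s e = v ∨ t e = v) → x e = 0) ∧ degMap S S s v x = degMap S S t v x := by
  simp only [Omega, OmegaMod, Submodule.mem_inf, Finsupp.mem_supported', LinearMap.mem_eqLocus,
    Set.mem_ofPred_eq]

theorem pairGeneratorMap_mem (S : Type) [Semiring S] {V E : Type} (s t : E → V) (v : V)
    (hloop : ∀ e : E, ¬(s e = v ∧ t e = v))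
    (x : {p : E × E // s p.1 = v ∧ t p.2 = v} →₀ S) :
    pairGeneratorMap S s t v x ∈ Omega S s t v := by
  classical
  induction x using Finsupp.induction_linear with
  | zero => simp
  | add x y hx hy => rw [map_add]; exact add_mem hx hy
  | single p c =>
    obtain ⟨⟨a, b⟩, ha, hb⟩ := p
    dsimp only at ha hb
    have ha' : t a ≠ v := fun h => hloop a ⟨ha, h⟩
    have hb' : s b ≠ v := fun h => hloop b ⟨h, hb⟩
    rw [pairGeneratorMap_single, mem_Omega]
    constructor
    · intro e he
      have h1 : a ≠ e := by rintro rfl; exact he (Or.inl ha)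
      have h2 : b ≠ e := by rintro rfl; exact he (Or.inr hb)
      simp [h1, h2]
    · simp [degMap_single, ha, hb, ha', hb']

/-- If `a` is the only edge with source `v`, the coefficient of the generator `(a, b)` is read off
as the value at `b`. -/
theorem pairGeneratorMap_apply_snd (S : Type) [Semiring S] {V E : Type} (s t : E → V) (v : V)
    (hloop : ∀ e : E, ¬(s e = v ∧ t e = v)) (a : E) (hu : ∀ e, s e = v → e = a)
    (x : {p : E × E // s p.1 = v ∧ t p.2 = v} →₀ S)
    (p : {p : E × E // s p.1 = v ∧ t p.2 = v}) :
    pairGeneratorMap S s t v x p.1.2 = x p := by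
  classical
  induction x using Finsupp.induction_linear with
  | zero => simp
  | add x y hx hy => simp [hx, hy]
  | single q c =>
    have h1 : q.1.1 ≠ p.1.2 := fun h => hloop p.1.2 ⟨h ▸ q.2.1, p.2.2⟩
    have h2 : q.1.2 = p.1.2 ↔ q = p := by
      refine ⟨fun h => Subtype.ext (Prod.ext ?_ h), fun h => by rw [h]⟩
      rw [hu _ q.2.1, hu _ p.2.1]
    rw [pairGeneratorMap_single, Finsupp.add_apply, Finsupp.single_eq_of_ne' h1, zero_add,
      Finsupp.single_apply, Finsupp.single_apply]
    simp only [h2]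

/-- If `v` is the source of a single edge, an element of `Ω_S(v)` is determined by its values on
the edges with target `v`. -/
theorem Omega_ext (S : Type) [Semiring S] {V E : Type} (s t : E → V) (v : V) (a : E)
    (ha : s a = v) (hu : ∀ e, s e = v → e = a) (x y : E →₀ S)
    (hx : x ∈ Omega S s t v) (hy : y ∈ Omega S s t v) (h : ∀ e, t e = v → x e = y e) :
    x = y := by
  rw [mem_Omega] at hx hy
  ext e
  by_cases ht : t e = v
  · exact h e ht
  by_cases hs : s e = v
  · rw [hu e hs, ← degMap_eq_apply S s v a ha hu x, ← degMap_eq_apply S s v a ha hu y,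
      hx.2, hy.2, degMap_congr S t v x y h]
  · rw [hx.1 e (by tauto), hy.1 e (by tauto)]

theorem orientation_free_of_source_unique (S : Type) [Semiring S] (V E : Type)
    (s t : E → V) (v : V) (hloop : ∀ e : E, ¬(s e = v ∧ t e = v)) (hdeg : ∃! e : E, s e = v) :
    Function.Injective ⇑(pairGeneratorMap S s t v) ∧
    Set.range ⇑(pairGeneratorMap S s t v) = ↑(Omega S s t v) := by
  obtain ⟨a, ha, hu⟩ := hdeg
  refine ⟨fun x y hxy => ?_, Set.Subset.antisymm ?_ fun l hl => ?_⟩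
  · ext p
    rw [← pairGeneratorMap_apply_snd S s t v hloop a hu x,
      ← pairGeneratorMap_apply_snd S s t v hloop a hu y, hxy]
  · rintro _ ⟨x, rfl⟩
    exact pairGeneratorMap_mem S s t v hloop x
  · have hinj : Function.Injective
        (fun p : {p : E × E // s p.1 = v ∧ t p.2 = v} => p.1.2) := fun p q h =>
      Subtype.ext (Prod.ext ((hu _ p.2.1).trans (hu _ q.2.1).symm) h)
    refine ⟨l.comapDomain _ hinj.injOn, ?_⟩
    refine Omega_ext S s t v a ha hu _ _ (pairGeneratorMap_mem S s t v hloop _) hl fun e he => ?_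
    exact pairGeneratorMap_apply_snd S s t v hloop a hu _ ⟨(a, e), ha, he⟩

theorem Omega_swap (S : Type) [Semiring S] {V E : Type} (s t : E → V) (v : V) :
    Omega S t s v = Omega S s t v := by
  ext x
  simp only [mem_Omega, or_comm, eq_comm]

/-- Reversing all edges exchanges the two entries of each pair in `P`. -/
def swapPairs {V E : Type} (s t : E → V) (v : V) :
    {p : E × E // s p.1 = v ∧ t p.2 = v} ≃ {p : E × E // t p.1 = v ∧ s p.2 = v} :=
  (Equiv.prodComm E E).subtypeEquiv fun _ => and_comm

theorem pairGeneratorMap_swap (S : Type) [Semiring S] {V E : Type} (s t : E → V) (v : V) :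
    ⇑(pairGeneratorMap S s t v) =
      ⇑(pairGeneratorMap S t s v) ∘ ⇑(Finsupp.domLCongr (R := S) (M := S) (swapPairs s t v)) := by
  funext x
  rw [Function.comp_apply]
  induction x using Finsupp.induction_linear with
  | zero => simp
  | add x y hx hy => rw [map_add, map_add, map_add, hx, hy]
  | single p c =>
    rw [Finsupp.domLCongr_single, pairGeneratorMap_single, pairGeneratorMap_single, add_comm]
    rfl

/-- if the vertex `v` carries no self-loop and is the source of exactly
one edge or the target of exactly one edge, then the `S`-linear map sending the
generator indexed by `(a,b) ∈ P` to `χ_a + χ_b` is a bijection from the free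
`S`-semimodule on `P` onto `Ω_S(v)`. -/
theorem orientation_free_of_degree_one (S : Type) [Semiring S] (V E : Type)
    (s t : E → V) (v : V)
    (hloop : ∀ e : E, ¬(s e = v ∧ t e = v))
    (hdeg : (∃! e : E, s e = v) ∨ (∃! e : E, t e = v)) :
    Function.Injective ⇑(pairGeneratorMap S s t v) ∧
    Set.range ⇑(pairGeneratorMap S s t v) = ↑(Omega S s t v) := by
  rcases hdeg with h | h
  · exact orientation_free_of_source_unique S V E s t v hloop h
  · obtain ⟨hi, hr⟩ := orientation_free_of_source_unique S V E t s v
      (fun e he => hloop e he.symm) h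
    rw [pairGeneratorMap_swap, (LinearEquiv.surjective _).range_comp, hr,
      Omega_swap]
    exact ⟨hi.comp (LinearEquiv.injective _), rfl⟩
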